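/- arXiv:0911.2797 — 2 statements merged into one kernel-verified Lean document; each statement's English description precedes it below -/
import Mathlib

section
/- Let a,b,c,d,e,f,g,h,i,j,k,l,m,n,p,q,r,s be 18 complex numbers with (fs−ip)·(gr−hq) ≠ 0. If there exist vectors x, y ∈ ℂ³ and complex numbers A₁, A₂, A₃, A₄ such that x⊗y = A₁v₁ + A₂v₂ + A₃v₃ + A₄v₄, then (cA₁ + lA₃)·(λA₁ + μA₃) = 0. -/
open Complex ComplexConjugate
open scoped ComplexOrder

noncomputable section

/-- The "odd" checkerboard vector with entries at positions (0,0),(2,0),(1,1),(0,2),(2,2). -/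
def oddVec (a b c d e : ℂ) : Fin 3 × Fin 3 → ℂ := fun u =>
  if u = (0, 0) then a else if u = (2, 0) then b else if u = (1, 1) then c
  else if u = (0, 2) then d else if u = (2, 2) then e else 0

/-- The "even" checkerboard vector with entries at positions (1,0),(0,1),(2,1),(1,2). -/
def evenVec (f g h i : ℂ) : Fin 3 × Fin 3 → ℂ := fun u =>
  if u = (1, 0) then f else if u = (0, 1) then g else if u = (2, 1) then h
  else if u = (1, 2) then i else 0

/-- Tensor product of two vectors of ℂ³, as a function on Fin 3 × Fin 3. -/
def tp (x y : Fin 3 → ℂ) : Fin 3 × Fin 3 → ℂ := fun u => x u.1 * y u.2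

/-- λ = a(hs−ir)+b(iq−gs)+d(fr−hp)+e(gp−fq). -/
def lamP (a b d e f g h i p q r s : ℂ) : ℂ :=
  a * (h * s - i * r) + b * (i * q - g * s) + d * (f * r - h * p) + e * (g * p - f * q)

/-- μ = f(mr−nq)+g(np−ks)+h(js−mp)+i(kq−jr). -/
def muP (f g h i j k m n p q r s : ℂ) : ℂ :=
  f * (m * r - n * q) + g * (n * p - k * s) + h * (j * s - m * p) + i * (k * q - j * r)

/-!
The centre entry of a rank-one tensor `x ⊗ y`, multiplied by its corner block, equals the outer
product of its middle column `u` and middle row `w`. Both come from `A₂v₂ + A₄v₄` alone, so `u` and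
`w` have the same coordinates `t = (A₂, A₄)` with respect to the columns of `U = [g q; h r]` and
`W = [f p; i s]`, and the coordinate matrix `t tᵀ` of `u wᵀ` is symmetric. The scalars `λ` and `μ`
measure the asymmetry of the coordinate matrices of the corner blocks of `v₁` and `v₃`.
-/

section CoordAsymmetry

open Matrix

variable {ι R : Type*} [Fintype ι] [DecidableEq ι] [CommRing R]

/-- The coordinate matrix of the tensor `M`, with respect to the columns of `U` in the first factor
and the columns of `W` in the second, minus its transpose. It is used as a linear obstruction to
`M` being `u ⊗ w` with the same coordinates for `u` and `w`. Adjugates replace inverses, which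
scales the coordinate matrix by `det U * det W` and keeps the definition polynomial. -/
def coordAsymmetry (U W : Matrix ι ι R) : Matrix ι ι R →ₗ[R] Matrix ι ι R where
  toFun M := U.adjugate * M * W.adjugateᵀ - (U.adjugate * M * W.adjugateᵀ)ᵀ
  map_add' M N := by
    simp only [mul_add, add_mul, transpose_add]
    abel
  map_smul' r M := by
    simp only [Matrix.mul_smul, Matrix.smul_mul, transpose_smul, smul_sub, RingHom.id_apply]

theorem coordAsymmetry_apply (U W M : Matrix ι ι R) :
    coordAsymmetry U W M =
      U.adjugate * M * W.adjugateᵀ - (U.adjugate * M * W.adjugateᵀ)ᵀ :=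
  rfl

theorem adjugate_mul_vecMulVec_mulVec_mul_adjugate_transpose
    {κ : Type*} [Fintype κ] [DecidableEq κ]
    (U : Matrix ι ι R) (W : Matrix κ κ R) (s : ι → R) (t : κ → R) :
    U.adjugate * vecMulVec (U *ᵥ s) (W *ᵥ t) * W.adjugateᵀ =
      (U.det * W.det) • vecMulVec s t := by
  rw [mul_vecMulVec, vecMulVec_mul, vecMul_transpose, mulVec_mulVec, mulVec_mulVec,
    adjugate_mul, adjugate_mul, smul_mulVec, smul_mulVec, one_mulVec, one_mulVec,
    smul_vecMulVec, vecMulVec_smul, smul_smul]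

theorem coordAsymmetry_vecMulVec_mulVec (U W : Matrix ι ι R) (t : ι → R) :
    coordAsymmetry U W (vecMulVec (U *ᵥ t) (W *ᵥ t)) = 0 := by
  rw [coordAsymmetry_apply, adjugate_mul_vecMulVec_mulVec_mul_adjugate_transpose,
    transpose_smul, transpose_vecMulVec, sub_self]

theorem smul_coordAsymmetry_vecMulVec_eq_zero {U W : Matrix ι ι R} {t x y : ι → R} {x₀ y₀ : R}
    (hx : y₀ • x = U *ᵥ t) (hy : x₀ • y = W *ᵥ t) :
    (x₀ * y₀) • coordAsymmetry U W (vecMulVec x y) = 0 := by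
  have hxy : (x₀ * y₀) • vecMulVec x y = vecMulVec (U *ᵥ t) (W *ᵥ t) := by
    rw [← hx, ← hy, smul_vecMulVec, vecMulVec_smul, smul_smul, mul_comm]
  rw [← map_smul, hxy, coordAsymmetry_vecMulVec_mulVec]

theorem coordAsymmetry_fin_two_zero_one (a b d e f g h i p q r s : R) :
    coordAsymmetry !![g, q; h, r] !![f, p; i, s] !![a, d; b, e] 0 1 =
      a * (h * s - i * r) + b * (i * q - g * s) + d * (f * r - h * p) + e * (g * p - f * q) := by
  simp only [coordAsymmetry_apply, adjugate_fin_two_of, Matrix.sub_apply, transpose_apply,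
    mul_apply, Fin.sum_univ_two, of_apply, cons_val', cons_val_zero, cons_val_one, cons_val_fin_one]
  ring

end CoordAsymmetry

section Checkerboard

open Matrix

/-- The matrix form of the "odd" checkerboard vector `oddVec`, with entries in any type that
has a zero. -/
def oddMatrix {R : Type*} [Zero R] (a b c d e : R) : Matrix (Fin 3) (Fin 3) R :=
  !![a, 0, d; 0, c, 0; b, 0, e]

/-- The matrix form of the "even" checkerboard vector `evenVec`, with entries in any type
that has a zero. -/
def evenMatrix {R : Type*} [Zero R] (f g h i : R) : Matrix (Fin 3) (Fin 3) R :=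
  !![0, g, 0; f, 0, i; 0, h, 0]

theorem oddVec_apply (a b c d e : ℂ) (u v : Fin 3) :
    oddVec a b c d e (u, v) = oddMatrix a b c d e u v := by
  fin_cases u <;> fin_cases v <;> rfl

theorem evenVec_apply (f g h i : ℂ) (u v : Fin 3) :
    evenVec f g h i (u, v) = evenMatrix f g h i u v := by
  fin_cases u <;> fin_cases v <;> rfl

theorem lamP_eq_coordAsymmetry (a b d e f g h i p q r s : ℂ) :
    lamP a b d e f g h i p q r s =
      coordAsymmetry !![g, q; h, r] !![f, p; i, s] !![a, d; b, e] 0 1 :=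
  (coordAsymmetry_fin_two_zero_one ..).symm

theorem muP_eq_coordAsymmetry (f g h i j k m n p q r s : ℂ) :
    muP f g h i j k m n p q r s =
      coordAsymmetry !![g, q; h, r] !![f, p; i, s] !![j, m; k, n] 0 1 := by
  rw [coordAsymmetry_fin_two_zero_one, muP]
  ring

theorem stmt3_general {R : Type*} [CommRing R] (a b c d e f g h i j k l m n p q r s : R)
    (x y : Fin 3 → R) (A₁ A₂ A₃ A₄ : R)
    (hxy : vecMulVec x y = A₁ • oddMatrix a b c d e + A₂ • evenMatrix f g h i
      + A₃ • oddMatrix j k l m n + A₄ • evenMatrix p q r s) :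
    (c * A₁ + l * A₃) *
      (coordAsymmetry !![g, q; h, r] !![f, p; i, s] !![a, d; b, e] 0 1 * A₁ +
        coordAsymmetry !![g, q; h, r] !![f, p; i, s] !![j, m; k, n] 0 1 * A₃) = 0 := by
  have entry (u v : Fin 3) := congrFun₂ hxy u v
  simp only [vecMulVec_apply, Matrix.add_apply, Matrix.smul_apply, smul_eq_mul] at entry
  have centre : x 1 * y 1 = c * A₁ + l * A₃ := by
    simpa [oddMatrix, evenMatrix, mul_comm] using entry 1 1
  have corners : vecMulVec ![x 0, x 2] ![y 0, y 2] =
      A₁ • !![a, d; b, e] + A₃ • !![j, m; k, n] := by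
    ext u v
    fin_cases u <;> fin_cases v <;> simp [entry, oddMatrix, evenMatrix, vecMulVec_apply]
  have column : y 1 • ![x 0, x 2] = !![g, q; h, r] *ᵥ ![A₂, A₄] := by
    ext u
    fin_cases u <;> simp [entry, oddMatrix, evenMatrix, mul_comm (y 1)]
  have row : x 1 • ![y 0, y 2] = !![f, p; i, s] *ᵥ ![A₂, A₄] := by
    ext v
    fin_cases v <;> simp [entry, oddMatrix, evenMatrix]
  have vanishing := congrFun₂ (smul_coordAsymmetry_vecMulVec_eq_zero column row) 0 1
  simpa only [centre, corners, map_add, map_smul, Matrix.add_apply, Matrix.smul_apply,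
    smul_eq_mul, Matrix.zero_apply, mul_comm A₁, mul_comm A₃] using vanishing

end Checkerboard

theorem stmt3 (a b c d e f g h i j k l m n p q r s : ℂ)
    (hcond : (f * s - i * p) * (g * r - h * q) ≠ 0)
    (x y : Fin 3 → ℂ) (A₁ A₂ A₃ A₄ : ℂ)
    (hxy : tp x y = A₁ • oddVec a b c d e + A₂ • evenVec f g h i
      + A₃ • oddVec j k l m n + A₄ • evenVec p q r s) :
    (c * A₁ + l * A₃) *
      (lamP a b d e f g h i p q r s * A₁ + muP f g h i j k m n p q r s * A₃) = 0 := by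
  rw [lamP_eq_coordAsymmetry, muP_eq_coordAsymmetry]
  refine stmt3_general (x := x) (y := y) (A₂ := A₂) (A₄ := A₄)
    (hxy := Matrix.ext fun u v ↦ ?_) ..
  simpa [tp, oddVec_apply, evenVec_apply, Matrix.vecMulVec_apply] using congrFun hxy (u, v)
end
end

section
/- Let ρ₁ be the state obtained from the checkerboard construction with parameters a=f=k=n=q=s=0, g=p=m=1, j=l=−1, h=i=𝐢, e=1−𝐢, b=d=−1+𝐢, c=r=−1−𝐢 (where 𝐢 is the imaginary unit; here N = 17). Then det(ρ₁^Γ) = 2⁶·7/17⁹ (in particular ρ₁^Γ is nonsingular), and ρ₁^Γ, which is a Hermitian 9×9 matrix, has exactly two negative eigenvalues (counted with multiplicity); in particular ρ₁ is an NPT state. -/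
open Complex ComplexConjugate
open scoped ComplexOrder

noncomputable section

/-- σ = Σ_{t=1}^4 v_t v_t†, a 9×9 complex matrix. -/
def sigmaM (a b c d e f g h i j k l m n p q r s : ℂ) :
    Matrix (Fin 3 × Fin 3) (Fin 3 × Fin 3) ℂ :=
  Matrix.of fun u w =>
    oddVec a b c d e u * conj (oddVec a b c d e w)
      + evenVec f g h i u * conj (evenVec f g h i w)
      + oddVec j k l m n u * conj (oddVec j k l m n w)
      + evenVec p q r s u * conj (evenVec p q r s w)

/-- N = Σ_{t=1}^4 ‖v_t‖². -/
def Nval (a b c d e f g h i j k l m n p q r s : ℂ) : ℝ :=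
  ∑ u : Fin 3 × Fin 3,
    (‖oddVec a b c d e u‖ ^ 2 + ‖evenVec f g h i u‖ ^ 2
      + ‖oddVec j k l m n u‖ ^ 2 + ‖evenVec p q r s u‖ ^ 2)

/-- ρ = (1/N) Σ_{t=1}^4 v_t v_t†. -/
def rhoM (a b c d e f g h i j k l m n p q r s : ℂ) :
    Matrix (Fin 3 × Fin 3) (Fin 3 × Fin 3) ℂ :=
  ((Nval a b c d e f g h i j k l m n p q r s : ℂ))⁻¹
    • sigmaM a b c d e f g h i j k l m n p q r s

/-- The partial transpose: (M^Γ)_{(i,j),(k,l)} = M_{(i,l),(k,j)}. -/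
def ptrans (M : Matrix (Fin 3 × Fin 3) (Fin 3 × Fin 3) ℂ) :
    Matrix (Fin 3 × Fin 3) (Fin 3 × Fin 3) ℂ :=
  Matrix.of fun u w => M (u.1, w.2) (w.1, u.2)

/-- The state ρ₁: parameters a=f=k=n=q=s=0, g=p=m=1, j=l=−1, h=i=𝐢, e=1−𝐢,
b=d=−1+𝐢, c=r=−1−𝐢. -/
def rho1 : Matrix (Fin 3 × Fin 3) (Fin 3 × Fin 3) ℂ :=
  rhoM 0 (-1 + I) (-1 - I) (-1 + I) (1 - I) 0 1 I I (-1) 0 (-1) 1 0 1 0 (-1 - I) 0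

/-!
Partial transposition preserves the parity of `i + j + k + l`, so `ρ₁^Γ` keeps the checkerboard
pattern of `ρ₁`: after reordering the positions it splits into a `5 × 5` and a `4 × 4` block.
Each block has an explicit factorization `L * D * Lᴴ` with `L` unit lower triangular and `D` real
diagonal. The determinant is the product of the pivots, and by Sylvester's law of inertia the
number of negative eigenvalues is the number of negative pivots, one in each block.
-/

open Matrix

section Inertia

variable {𝕜 m n : Type*} [RCLike 𝕜] [Fintype m] [DecidableEq m] [Fintype n] [DecidableEq n]

theorem star_dotProduct_diagonal_ofReal_mulVec (d : n → ℝ) (x : n → 𝕜) :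
    star x ⬝ᵥ diagonal (RCLike.ofReal ∘ d) *ᵥ x = ((∑ i, d i * ‖x i‖ ^ 2 : ℝ) : 𝕜) := by
  simp only [dotProduct, mulVec_diagonal, Pi.star_apply, RCLike.star_def, Function.comp_apply,
    RCLike.ofReal_sum, RCLike.ofReal_mul, RCLike.ofReal_pow, ← RCLike.conj_mul]
  exact Finset.sum_congr rfl fun i _ => by ring

theorem sum_mul_sq_norm_eq_of_diagonal_eq {w : n → ℝ} {d : m → ℝ} {M : Matrix m n 𝕜}
    (h : diagonal (RCLike.ofReal ∘ w : n → 𝕜) = Mᴴ * diagonal (RCLike.ofReal ∘ d : m → 𝕜) * M)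
    (x : n → 𝕜) :
    ∑ i, w i * ‖x i‖ ^ 2 = ∑ k, d k * ‖(M *ᵥ x) k‖ ^ 2 := by
  apply RCLike.ofReal_injective (K := 𝕜)
  rw [← star_dotProduct_diagonal_ofReal_mulVec, ← star_dotProduct_diagonal_ofReal_mulVec, h,
    star_mulVec, ← dotProduct_mulVec, mulVec_mulVec, mulVec_mulVec, Matrix.mul_assoc]

theorem eq_zero_of_diagonal_eq {w : n → ℝ} {d : m → ℝ} {M : Matrix m n 𝕜}
    (h : diagonal (RCLike.ofReal ∘ w : n → 𝕜) = Mᴴ * diagonal (RCLike.ofReal ∘ d : m → 𝕜) * M)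
    {x : n → 𝕜} (hx : ∀ i, 0 ≤ w i → x i = 0)
    (hMx : ∀ k, d k < 0 → (M *ᵥ x) k = 0) : x = 0 := by
  have term_nonpos (i) : w i * ‖x i‖ ^ 2 ≤ 0 := by
    rcases lt_or_ge (w i) 0 with hi | hi
    · exact mul_nonpos_of_nonpos_of_nonneg hi.le (sq_nonneg _)
    · simp [hx i hi]
  have sum_nonneg : 0 ≤ ∑ i, w i * ‖x i‖ ^ 2 := by
    rw [sum_mul_sq_norm_eq_of_diagonal_eq h]
    refine Finset.sum_nonneg fun k _ => ?_
    rcases lt_or_ge (d k) 0 with hk | hk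
    · simp [hMx k hk]
    · positivity
  have sum_eq_zero : ∑ i, w i * ‖x i‖ ^ 2 = 0 :=
    le_antisymm (Finset.sum_nonpos fun i _ => term_nonpos i) sum_nonneg
  funext i
  rcases lt_or_ge (w i) 0 with hi | hi
  · have := (Finset.sum_eq_zero_iff_of_nonpos fun i _ => term_nonpos i).1 sum_eq_zero i
      (Finset.mem_univ i)
    simpa [hi.ne] using this
  · exact hx i hi

theorem ncard_neg_le_of_diagonal_eq {ι : Type*} [Finite ι] [DecidableEq ι] {w : ι → ℝ}
    {d : m → ℝ} {M : Matrix m ι 𝕜}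
    (h : diagonal (RCLike.ofReal ∘ w : ι → 𝕜) = Mᴴ * diagonal (RCLike.ofReal ∘ d : m → 𝕜) * M) :
    {i | w i < 0}.ncard ≤ {k | d k < 0}.ncard := by
  cases nonempty_fintype ι
  let T : Pi.spanSubset 𝕜 {i | w i < 0} →ₗ[𝕜] ({k | d k < 0} → 𝕜) :=
    LinearMap.funLeft 𝕜 𝕜 Subtype.val ∘ₗ M.mulVecLin ∘ₗ Submodule.subtype _
  have T_injective : Function.Injective T := by
    refine (injective_iff_map_eq_zero T).2 fun x hTx => Subtype.ext ?_
    refine eq_zero_of_diagonal_eq h (fun i hi => ?_) fun k hk => congrFun hTx ⟨k, hk⟩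
    exact Pi.mem_spanSubset_iff.1 x.2 i hi.not_gt
  simpa [Pi.dim_spanSubset, ← Nat.card_eq_fintype_card, Nat.card_coe_set_eq] using
    LinearMap.finrank_le_finrank_of_injective T_injective

theorem ncard_neg_eq_of_diagonal_eq {w : n → ℝ} {d : m → ℝ} {M : Matrix m n 𝕜}
    {N : Matrix n m 𝕜} (hMN : M * N = 1)
    (h : diagonal (RCLike.ofReal ∘ w : n → 𝕜) = Mᴴ * diagonal (RCLike.ofReal ∘ d : m → 𝕜) * M) :
    {i | w i < 0}.ncard = {k | d k < 0}.ncard := by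
  have hNM : Nᴴ * Mᴴ = 1 := by rw [← conjTranspose_mul, hMN, conjTranspose_one]
  refine le_antisymm (ncard_neg_le_of_diagonal_eq h) (ncard_neg_le_of_diagonal_eq (M := N) ?_)
  calc diagonal (RCLike.ofReal ∘ d : m → 𝕜)
      = (Nᴴ * Mᴴ) * diagonal (RCLike.ofReal ∘ d : m → 𝕜) * (M * N) := by
        rw [hNM, hMN, Matrix.one_mul, Matrix.mul_one]
    _ = Nᴴ * diagonal (RCLike.ofReal ∘ w : n → 𝕜) * N := by simp only [h, Matrix.mul_assoc]

/-- **Sylvester's law of inertia** for a Hermitian matrix congruent to a real diagonal matrix. -/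
theorem ncard_eigenvalues_neg_eq_of_eq_mul_diagonal_mul_conjTranspose {A : Matrix n n 𝕜}
    (hA : A.IsHermitian) {L : Matrix n m 𝕜} {R : Matrix m n 𝕜} (hRL : R * L = 1) {d : m → ℝ}
    (h : A = L * diagonal (RCLike.ofReal ∘ d : m → 𝕜) * Lᴴ) :
    {i | hA.eigenvalues i < 0}.ncard = {k | d k < 0}.ncard := by
  let U : Matrix n n 𝕜 := hA.eigenvectorUnitary
  have hU : U * Uᴴ = 1 := Unitary.coe_mul_star_self hA.eigenvectorUnitary
  refine ncard_neg_eq_of_diagonal_eq (M := Lᴴ * U) (N := Uᴴ * Rᴴ) ?_ ?_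
  · calc Lᴴ * U * (Uᴴ * Rᴴ) = Lᴴ * (U * Uᴴ) * Rᴴ := by simp only [Matrix.mul_assoc]
      _ = (R * L)ᴴ := by rw [hU, Matrix.mul_one, conjTranspose_mul]
      _ = 1 := by rw [hRL, conjTranspose_one]
  · calc diagonal (RCLike.ofReal ∘ hA.eigenvalues) = Uᴴ * A * U := by
          rw [← hA.conjStarAlgAut_star_eigenvectorUnitary, Unitary.conjStarAlgAut_star_apply]
          rfl
      _ = (Lᴴ * U)ᴴ * diagonal (RCLike.ofReal ∘ d : m → 𝕜) * (Lᴴ * U) := by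
          rw [h, conjTranspose_mul, conjTranspose_conjTranspose]
          simp only [Matrix.mul_assoc]

end Inertia

section SymmetricPivoting

variable {𝕜 m n : Type*} [RCLike 𝕜] [Fintype m] [DecidableEq m]
  {A : Matrix n n 𝕜} {L : Matrix m m 𝕜} {d : m → ℝ} {e : m ≃ n}

theorem isHermitian_of_submatrix_eq_mul_diagonal_mul_conjTranspose
    (h : A.submatrix e e = L * diagonal (RCLike.ofReal ∘ d : m → 𝕜) * Lᴴ) : A.IsHermitian := by
  rw [← isHermitian_submatrix_equiv e, h]
  refine isHermitian_mul_mul_conjTranspose L (isHermitian_diagonal_iff.2 fun i => ?_)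
  exact RCLike.conj_ofReal (d i)

variable [Fintype n] [DecidableEq n]

theorem det_of_submatrix_eq_mul_diagonal_mul_conjTranspose
    (h : A.submatrix e e = L * diagonal (RCLike.ofReal ∘ d : m → 𝕜) * Lᴴ) :
    A.det = L.det * (∏ i, (d i : 𝕜)) * star L.det := by
  rw [← det_submatrix_equiv_self e, h, det_mul, det_mul, det_diagonal, det_conjTranspose]
  rfl

theorem ncard_eigenvalues_neg_of_submatrix_eq_mul_diagonal_mul_conjTranspose
    (hA : A.IsHermitian) (hL : IsUnit L.det)
    (h : A.submatrix e e = L * diagonal (RCLike.ofReal ∘ d : m → 𝕜) * Lᴴ) :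
    {i | hA.eigenvalues i < 0}.ncard = {k | d k < 0}.ncard := by
  refine ncard_eigenvalues_neg_eq_of_eq_mul_diagonal_mul_conjTranspose hA
    (L := L.submatrix e.symm id) (R := L⁻¹.submatrix id e.symm) ?_ ?_
  · rw [submatrix_mul_equiv, nonsing_inv_mul L hL, submatrix_id_id]
  · calc A = (A.submatrix e e).submatrix e.symm e.symm := by simp
      _ = (L * diagonal (RCLike.ofReal ∘ d : m → 𝕜) * Lᴴ).submatrix e.symm e.symm := by rw [h]
      _ = _ := rfl

end SymmetricPivoting

section Checkerboard

/-- A matrix on `ℂ³ ⊗ ℂ³` has the checkerboard pattern if its entries vanish whenever the row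
position and the column position have different colours, the colour of `(i, j)` being the parity
of `i + j`. -/
def IsCheckerboard (M : Matrix (Fin 3 × Fin 3) (Fin 3 × Fin 3) ℂ) : Prop :=
  ∀ i j k l : Fin 3, Odd (i + j + k + l : ℕ) → M (i, j) (k, l) = 0

theorem IsCheckerboard.ptrans {M : Matrix (Fin 3 × Fin 3) (Fin 3 × Fin 3) ℂ}
    (hM : IsCheckerboard M) : IsCheckerboard (ptrans M) := fun i j k l h =>
  hM i l k j (by convert h using 1; ring)

theorem oddVec_apply_eq_zero (a b c d e : ℂ) {i j : Fin 3} (h : Odd (i + j : ℕ)) :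
    oddVec a b c d e (i, j) = 0 := by
  revert h
  fin_cases i <;> fin_cases j <;> first | exact fun _ => rfl | exact fun h => absurd h (by decide)

theorem evenVec_apply_eq_zero (f g h i : ℂ) {k l : Fin 3} (hkl : Even (k + l : ℕ)) :
    evenVec f g h i (k, l) = 0 := by
  revert hkl
  fin_cases k <;> fin_cases l <;> first | exact fun _ => rfl | exact fun h => absurd h (by decide)

theorem isCheckerboard_sigmaM (a b c d e f g h i j k l m n p q r s : ℂ) :
    IsCheckerboard (sigmaM a b c d e f g h i j k l m n p q r s) := fun u v w z huvwz => by
  rw [add_assoc, Nat.odd_add] at huvwz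
  rcases Nat.even_or_odd (u + v : ℕ) with huv | huv
  · have hwz : Odd (w + z : ℕ) := by grind
    simp [sigmaM, evenVec_apply_eq_zero _ _ _ _ huv, oddVec_apply_eq_zero _ _ _ _ _ hwz]
  · have hwz : Even (w + z : ℕ) := huvwz.1 huv
    simp [sigmaM, oddVec_apply_eq_zero _ _ _ _ _ huv, evenVec_apply_eq_zero _ _ _ _ hwz]

/-- The positions supporting `oddVec`, listed in the pivot order used to factor `oddBlock`. -/
def oddSite : Fin 5 → Fin 3 × Fin 3 := ![(0, 0), (0, 2), (2, 0), (1, 1), (2, 2)]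

/-- The positions supporting `evenVec`, listed in the pivot order used to factor `evenBlock`. -/
def evenSite : Fin 4 → Fin 3 × Fin 3 := ![(1, 0), (2, 1), (1, 2), (0, 1)]

/-- The reordering of the nine positions that makes a checkerboard matrix block diagonal. -/
def siteEquiv : Fin 5 ⊕ Fin 4 ≃ Fin 3 × Fin 3 :=
  Equiv.ofBijective (Sum.elim oddSite evenSite) (by decide)

theorem IsCheckerboard.submatrix_siteEquiv {M : Matrix (Fin 3 × Fin 3) (Fin 3 × Fin 3) ℂ}
    (hM : IsCheckerboard M) :
    M.submatrix siteEquiv siteEquiv =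
      fromBlocks (M.submatrix oddSite oddSite) 0 0 (M.submatrix evenSite evenSite) := by
  have even_oddSite : ∀ a, Even ((oddSite a).1 + (oddSite a).2 : ℕ) := by decide
  have odd_evenSite : ∀ b, Odd ((evenSite b).1 + (evenSite b).2 : ℕ) := by decide
  ext (a | a) (b | b)
  · rfl
  · exact hM _ _ _ _ (by rw [add_assoc]; exact (even_oddSite a).add_odd (odd_evenSite b))
  · exact hM _ _ _ _ (by rw [add_assoc]; exact (odd_evenSite a).add_even (even_oddSite b))
  · rfl

theorem Nval_eq_sum_sq_norm (a b c d e f g h i j k l m n p q r s : ℂ) :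
    Nval a b c d e f g h i j k l m n p q r s =
      (‖a‖ ^ 2 + ‖b‖ ^ 2 + ‖c‖ ^ 2 + ‖d‖ ^ 2 + ‖e‖ ^ 2) +
      (‖f‖ ^ 2 + ‖g‖ ^ 2 + ‖h‖ ^ 2 + ‖i‖ ^ 2) +
      (‖j‖ ^ 2 + ‖k‖ ^ 2 + ‖l‖ ^ 2 + ‖m‖ ^ 2 + ‖n‖ ^ 2) +
      (‖p‖ ^ 2 + ‖q‖ ^ 2 + ‖r‖ ^ 2 + ‖s‖ ^ 2) := by
  simp only [Nval, oddVec, Fin.isValue, evenVec, Fintype.sum_prod_type, Prod.mk.injEq,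
    Fin.sum_univ_succ, and_true, zero_ne_one, and_false, ↓reduceIte, Fin.reduceEq,
    Fin.succ_ne_zero, Fin.succ_zero_eq_one, Finset.univ_unique, Fin.default_eq_zero,
    Finset.sum_singleton, Fin.succ_one_eq_two, norm_zero, ne_eq, OfNat.ofNat_ne_zero,
    not_false_eq_true, zero_pow, add_zero, zero_add]
  ring

end Checkerboard

section Rho1

/-- The unnormalized state `17 ρ₁`. -/
def sigma1 : Matrix (Fin 3 × Fin 3) (Fin 3 × Fin 3) ℂ :=
  sigmaM 0 (-1 + I) (-1 - I) (-1 + I) (1 - I) 0 1 I I (-1) 0 (-1) 1 0 1 0 (-1 - I) 0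

theorem isCheckerboard_sigma1 : IsCheckerboard sigma1 := by
  apply isCheckerboard_sigmaM

theorem rho1_eq_smul_sigma1 : rho1 = (17 : ℂ)⁻¹ • sigma1 := by
  unfold rho1 rhoM sigma1
  rw [Nval_eq_sum_sq_norm]
  norm_num [Complex.sq_norm, normSq_apply]

/-- The diagonal block of `sigma1^Γ` on the positions `oddSite`. -/
def oddBlock : Matrix (Fin 5) (Fin 5) ℂ :=
  !![ 1, -1,  0,      0,      2;
     -1,  3,  0,     -I,     -2;
      0,  0,  2,     -1 - I, -2;
      0,  I, -1 + I,  3,      1;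
      2, -2, -2,      1,      2]

/-- The diagonal block of `sigma1^Γ` on the positions `evenSite`. -/
def evenBlock : Matrix (Fin 4) (Fin 4) ℂ :=
  !![ 1,      2 * I,  0,           1;
     -2 * I,  3,      2 * I,       I;
      0,     -2 * I,  1,          -1 + 2 * I;
      1,     -I,     -1 - 2 * I,   1]

theorem ptrans_sigma1_submatrix_oddSite :
    (ptrans sigma1).submatrix oddSite oddSite = oddBlock := by
  ext a b
  fin_cases a <;> fin_cases b <;>
    simp [ptrans, sigma1, sigmaM, oddVec, evenVec, oddSite, oddBlock, Complex.ext_iff] <;>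
    norm_num

theorem ptrans_sigma1_submatrix_evenSite :
    (ptrans sigma1).submatrix evenSite evenSite = evenBlock := by
  ext a b
  fin_cases a <;> fin_cases b <;>
    simp [ptrans, sigma1, sigmaM, oddVec, evenVec, evenSite, evenBlock, Complex.ext_iff] <;>
    norm_num

/-- The unit lower triangular factor of `oddBlock`. -/
def oddLower : Matrix (Fin 5) (Fin 5) ℂ :=
  !![ 1, 0,      0,             0,          0;
     -1, 1,      0,             0,          0;
      0, 0,      1,             0,          0;
      0, I / 2, (-1 + I) / 2,   1,          0;
      2, 0,     -1,            -2 / 3 * I,  1]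

/-- The unit lower triangular factor of `evenBlock`. -/
def evenLower : Matrix (Fin 4) (Fin 4) ℂ :=
  !![ 1,     0,      0,              0;
     -2 * I, 1,      0,              0;
      0,     2 * I,  1,              0;
      1,     3 * I,  1 - 2 / 5 * I,  1]

/-- The pivots of `oddBlock`. -/
def oddPivot : Fin 5 → ℝ := ![1, 2, 2, 3 / 2, -14 / 3]

/-- The pivots of `evenBlock`. -/
def evenPivot : Fin 4 → ℝ := ![1, -1, 5, 16 / 5]

theorem oddBlock_eq_mul_diagonal_mul_conjTranspose :
    oddBlock = oddLower * diagonal (RCLike.ofReal ∘ oddPivot) * oddLowerᴴ := by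
  ext a b
  rw [mul_apply]
  simp only [mul_diagonal, conjTranspose_apply]
  fin_cases a <;> fin_cases b <;>
    norm_num [oddBlock, oddLower, oddPivot, Fin.sum_univ_succ, Complex.ext_iff, Complex.conj_ofNat]

theorem evenBlock_eq_mul_diagonal_mul_conjTranspose :
    evenBlock = evenLower * diagonal (RCLike.ofReal ∘ evenPivot) * evenLowerᴴ := by
  ext a b
  rw [mul_apply]
  simp only [mul_diagonal, conjTranspose_apply]
  fin_cases a <;> fin_cases b <;>
    norm_num [evenBlock, evenLower, evenPivot, Fin.sum_univ_succ, Complex.ext_iff,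
      Complex.conj_ofNat]

theorem det_oddLower : oddLower.det = 1 := by
  simp [oddLower, det_succ_row_zero, Fin.sum_univ_succ]

theorem det_evenLower : evenLower.det = 1 := by
  simp [evenLower, det_succ_row_zero, Fin.sum_univ_succ]

/-- The unit lower triangular factor of `ρ₁^Γ` in the order `siteEquiv`. -/
def rho1Lower : Matrix (Fin 5 ⊕ Fin 4) (Fin 5 ⊕ Fin 4) ℂ := fromBlocks oddLower 0 0 evenLower

/-- The pivots of `ρ₁^Γ` in the order `siteEquiv`. -/
def rho1Pivot : Fin 5 ⊕ Fin 4 → ℝ := (17 : ℝ)⁻¹ • Sum.elim oddPivot evenPivot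

theorem det_rho1Lower : rho1Lower.det = 1 := by
  rw [rho1Lower, det_fromBlocks_zero₂₁, det_oddLower, det_evenLower, mul_one]

theorem prod_rho1Pivot : ∏ i, rho1Pivot i = 2 ^ 6 * 7 / 17 ^ 9 := by
  norm_num [rho1Pivot, oddPivot, evenPivot, Fintype.prod_sum_type, Fin.prod_univ_succ]

theorem setOf_rho1Pivot_neg : {i | rho1Pivot i < 0} = {Sum.inl 4, Sum.inr 1} := by
  ext (i | i) <;> fin_cases i <;> simp [rho1Pivot, oddPivot, evenPivot] <;> norm_num

theorem ptrans_rho1_submatrix_siteEquiv :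
    (ptrans rho1).submatrix siteEquiv siteEquiv =
      rho1Lower * diagonal (RCLike.ofReal ∘ rho1Pivot) * rho1Lowerᴴ := by
  have diagonal_pivot : diagonal (RCLike.ofReal ∘ rho1Pivot : _ → ℂ) = (17 : ℂ)⁻¹ •
      fromBlocks (diagonal (RCLike.ofReal ∘ oddPivot)) 0 0
        (diagonal (RCLike.ofReal ∘ evenPivot)) := by
    rw [fromBlocks_diagonal, ← diagonal_smul]
    congr 1
    ext (i | i) <;> simp [rho1Pivot]
  have block_diagonal : (ptrans sigma1).submatrix siteEquiv siteEquiv =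
      fromBlocks oddBlock 0 0 evenBlock := by
    rw [isCheckerboard_sigma1.ptrans.submatrix_siteEquiv, ptrans_sigma1_submatrix_oddSite,
      ptrans_sigma1_submatrix_evenSite]
  calc (ptrans rho1).submatrix siteEquiv siteEquiv
      = (17 : ℂ)⁻¹ • (ptrans sigma1).submatrix siteEquiv siteEquiv := by
        rw [rho1_eq_smul_sigma1]; rfl
    _ = rho1Lower * diagonal (RCLike.ofReal ∘ rho1Pivot) * rho1Lowerᴴ := by
        rw [block_diagonal, diagonal_pivot, rho1Lower, fromBlocks_conjTranspose, Matrix.mul_smul,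
          Matrix.smul_mul, fromBlocks_multiply, fromBlocks_multiply,
          oddBlock_eq_mul_diagonal_mul_conjTranspose, evenBlock_eq_mul_diagonal_mul_conjTranspose]
        simp

end Rho1

theorem stmt9 :
    (ptrans rho1).det = ((2 ^ 6 * 7 / 17 ^ 9 : ℂ)) ∧
    (∃ hH : (ptrans rho1).IsHermitian,
      {w : Fin 3 × Fin 3 | hH.eigenvalues w < 0}.ncard = 2) ∧
    ¬ (ptrans rho1).PosSemidef := by
  have hH : (ptrans rho1).IsHermitian :=
    isHermitian_of_submatrix_eq_mul_diagonal_mul_conjTranspose ptrans_rho1_submatrix_siteEquiv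
  have hdet : (ptrans rho1).det = ((2 ^ 6 * 7 / 17 ^ 9 : ℂ)) := by
    rw [det_of_submatrix_eq_mul_diagonal_mul_conjTranspose ptrans_rho1_submatrix_siteEquiv,
      det_rho1Lower, ← RCLike.ofReal_prod, prod_rho1Pivot]
    simp
  have hneg : {w | hH.eigenvalues w < 0}.ncard = 2 := by
    rw [ncard_eigenvalues_neg_of_submatrix_eq_mul_diagonal_mul_conjTranspose hH
      (by simp [det_rho1Lower]) ptrans_rho1_submatrix_siteEquiv, setOf_rho1Pivot_neg,
      Set.ncard_pair Sum.inl_ne_inr]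
  refine ⟨hdet, ⟨hH, hneg⟩, fun hpos => ?_⟩
  obtain ⟨w, hw⟩ := Set.nonempty_of_ncard_ne_zero (hneg.trans_ne two_ne_zero)
  exact (hpos.eigenvalues_nonneg w).not_gt hw
end
end
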